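/- arXiv:2206.15368 — 2 statements merged into one kernel-verified Lean document; each statement's English description precedes it below -/
import Mathlib

section
/- (Local exclusion principle) There exists a constant C_d > 0 depending only on the dimension d such that: for every open ball B ⊂ ℝ^d, every finite family u_1, …, u_N of continuously differentiable functions from ℝ^d to ℂ whose restrictions to B are orthonormal in L²(B), and every choice of coefficients λ_1, …, λ_N ∈ [0,1], one has Σ_{n=1}^N λ_n ∫_B |∇u_n(x)|² dx ≥ (1/(C_d |B|^{2/d})) · (∫_B ρ(x) dx − 1), where ρ(x) = Σ_{n=1}^N λ_n |u_n(x)|² and |B| denotes the Lebesgue measure of B. -/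
open MeasureTheory
open scoped BigOperators

/-- `|∇f(x)|² = Σᵢ |∂ᵢ f(x)|²` for a function `f : ℝ^d → ℂ`. -/
noncomputable def gradSq {d : ℕ} (f : EuclideanSpace ℝ (Fin d) → ℂ)
    (x : EuclideanSpace ℝ (Fin d)) : ℝ :=
  ∑ i : Fin d, ‖fderiv ℝ f x (EuclideanSpace.single i 1)‖ ^ 2

open Module (finrank)
open AffineMap (lineMap)
open scoped ENNReal ComplexConjugate

/-!
Let `K` be convex with volume `V` and `n` the dimension of the space. Only the constant function
separates `∫ |u|²` from the Dirichlet energy: subtracting the mean `m` of `u` gives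
`∫ |u - m|² = ∫ |u|² - |∫ u|² / V`, and Bessel's inequality for the constant function bounds the
total loss `∑ |∫ uₙ|² / V` by `1`. What remains is the Poincaré inequality
`∫ |u - m|² ≤ 2ⁿ (diam K)² ∫ |∇u|²`. To get it, average `|u x - u y|²` over `K × K`, write the
difference as an integral of `∇u` along the segment from `y` to `x`, and change variables to the
running point `y + t (x - y)`: in `x` if `t ≥ 1/2` and in `y` otherwise, so that the inverse
Jacobian never exceeds `2ⁿ`.
-/

section MeanSquare

variable {α : Type*} [MeasurableSpace α] {μ : Measure α}

lemma sq_lintegral_le_measure_univ_mul {g : α → ℝ≥0∞} (hg : AEMeasurable g μ) :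
    (∫⁻ x, g x ∂μ) ^ 2 ≤ μ Set.univ * ∫⁻ x, g x ^ 2 ∂μ := by
  have holder := ENNReal.lintegral_mul_le_Lp_mul_Lq μ Real.HolderConjugate.two_two
    (aemeasurable_const (b := 1)) hg
  simp only [Pi.mul_apply, one_mul, ENNReal.rpow_two, one_pow, lintegral_one] at holder
  calc (∫⁻ x, g x ∂μ) ^ 2
      ≤ (μ Set.univ ^ (1 / 2 : ℝ) * (∫⁻ x, g x ^ 2 ∂μ) ^ (1 / 2 : ℝ)) ^ 2 := by gcongr
    _ = μ Set.univ * ∫⁻ x, g x ^ 2 ∂μ := by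
      simp only [mul_pow, ← ENNReal.rpow_mul_natCast]
      norm_num

variable {F : Type*} [NormedAddCommGroup F]

lemma ofReal_integral_sq_norm {f : α → F} (hf : Integrable (fun x => ‖f x‖ ^ 2) μ) :
    ENNReal.ofReal (∫ x, ‖f x‖ ^ 2 ∂μ) = ∫⁻ x, ‖f x‖ₑ ^ 2 ∂μ := by
  rw [ofReal_integral_eq_lintegral_ofReal hf (.of_forall fun x => sq_nonneg _)]
  simp only [ENNReal.ofReal_pow (norm_nonneg _), ofReal_norm]

lemma measure_univ_mul_sq_enorm_sub_average_le [NormedSpace ℝ F] [CompleteSpace F]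
    [IsFiniteMeasure μ] {f : α → F} (hf : Integrable f μ) (a : F) :
    μ Set.univ * ‖a - ⨍ x, f x ∂μ‖ₑ ^ 2 ≤ ∫⁻ x, ‖a - f x‖ₑ ^ 2 ∂μ := by
  rcases eq_zero_or_neZero μ with rfl | _
  · simp
  have hμ0 : μ Set.univ ≠ 0 := NeZero.ne _
  have hμ : μ Set.univ ≠ ∞ := measure_ne_top μ _
  have jensen : μ Set.univ * ‖a - ⨍ x, f x ∂μ‖ₑ ≤ ∫⁻ x, ‖a - f x‖ₑ ∂μ :=
    calc μ Set.univ * ‖a - ⨍ x, f x ∂μ‖ₑ = ‖μ.real Set.univ • (a - ⨍ x, f x ∂μ)‖ₑ := by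
          rw [enorm_smul, Real.enorm_eq_ofReal measureReal_nonneg, ofReal_measureReal]
      _ = ‖∫ x, (a - f x) ∂μ‖ₑ := by
          rw [integral_sub (integrable_const a) hf, integral_const, smul_sub,
            measure_smul_average]
      _ ≤ ∫⁻ x, ‖a - f x‖ₑ ∂μ := enorm_integral_le_lintegral_enorm _
  rw [← ENNReal.mul_le_mul_iff_right hμ0 hμ]
  calc μ Set.univ * (μ Set.univ * ‖a - ⨍ x, f x ∂μ‖ₑ ^ 2)
      = (μ Set.univ * ‖a - ⨍ x, f x ∂μ‖ₑ) ^ 2 := by ring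
    _ ≤ (∫⁻ x, ‖a - f x‖ₑ ∂μ) ^ 2 := by gcongr
    _ ≤ μ Set.univ * ∫⁻ x, ‖a - f x‖ₑ ^ 2 ∂μ :=
      sq_lintegral_le_measure_univ_mul (aestronglyMeasurable_const.sub hf.1).enorm

lemma integral_sq_norm_sub_average [InnerProductSpace ℝ F] [CompleteSpace F] [IsFiniteMeasure μ]
    {f : α → F} (hf : MemLp f 2 μ) :
    ∫ x, ‖f x - ⨍ y, f y ∂μ‖ ^ 2 ∂μ =
      (∫ x, ‖f x‖ ^ 2 ∂μ) - ‖∫ x, f x ∂μ‖ ^ 2 / μ.real Set.univ := by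
  have hf₁ : Integrable f μ := hf.integrable one_le_two
  set m := ⨍ y, f y ∂μ
  have h_mean : ∫ x, f x ∂μ = μ.real Set.univ • m := (measure_smul_average μ f).symm
  have h_cross : ∫ x, 2 * inner ℝ m (f x) ∂μ = 2 * (μ.real Set.univ * ‖m‖ ^ 2) := by
    rw [integral_const_mul, integral_inner hf₁, h_mean, inner_smul_right,
      real_inner_self_eq_norm_sq]
  have h_sq : Integrable (fun x => ‖f x‖ ^ 2) μ := (memLp_two_iff_integrable_sq_norm hf.1).1 hf
  have h_inner : Integrable (fun x => 2 * inner ℝ m (f x)) μ := (hf₁.const_inner m).const_mul 2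
  have h_diff : Integrable (fun x => ‖f x‖ ^ 2 - 2 * inner ℝ m (f x)) μ := h_sq.sub h_inner
  simp only [norm_sub_sq_real, real_inner_comm m]
  rw [integral_add h_diff (integrable_const _), integral_sub h_sq h_inner, h_cross,
    integral_const, h_mean, norm_smul, Real.norm_of_nonneg measureReal_nonneg]
  rcases eq_or_ne (μ.real Set.univ) 0 with h | _
  · simp only [h, zero_smul, zero_mul, mul_zero, zero_pow two_ne_zero, zero_div]
    ring
  · rw [smul_eq_mul]
    field_simp
    ring

end MeanSquare

section Orthonormal

variable {α 𝕜 : Type*} [MeasurableSpace α] {μ : Measure α} [RCLike 𝕜]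

lemma inner_toLp_toLp {f g : α → 𝕜} (hf : MemLp f 2 μ) (hg : MemLp g 2 μ) :
    inner 𝕜 (hf.toLp f) (hg.toLp g) = ∫ x, g x * conj (f x) ∂μ := by
  rw [L2.inner_def]
  refine integral_congr_ae ?_
  filter_upwards [hf.coeFn_toLp, hg.coeFn_toLp] with x hfx hgx
  rw [hfx, hgx, RCLike.inner_apply]

variable {ι : Type*} [Fintype ι] [DecidableEq ι] [IsFiniteMeasure μ] {u : ι → α → 𝕜}

lemma sum_sq_norm_integral_le_measureReal_univ (hu : ∀ n, MemLp (u n) 2 μ)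
    (ho : ∀ m n, ∫ x, u m x * conj (u n x) ∂μ = if m = n then 1 else 0) :
    ∑ n, ‖∫ x, u n x ∂μ‖ ^ 2 ≤ μ.real Set.univ := by
  have h_one : MemLp (fun _ : α => (1 : 𝕜)) 2 μ := memLp_const 1
  have h_orthonormal : Orthonormal 𝕜 fun n => (hu n).toLp (u n) := by
    refine orthonormal_iff_ite.2 fun m n => ?_
    simp only [inner_toLp_toLp, ho, eq_comm]
  have h_norm_one : ‖h_one.toLp‖ ^ 2 = μ.real Set.univ := by
    rw [← RCLike.ofReal_inj (K := 𝕜), RCLike.ofReal_pow, ← inner_self_eq_norm_sq_to_K,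
      inner_toLp_toLp]
    simp [RCLike.real_smul_eq_coe_mul]
  have bessel := h_orthonormal.sum_inner_products_le h_one.toLp (s := Finset.univ)
  simp only [norm_inner_symm _ (h_one.toLp _)] at bessel
  simpa only [inner_toLp_toLp, map_one, mul_one, h_norm_one] using bessel

lemma integral_sum_mul_sq_norm_sub_one_le (hu : ∀ n, MemLp (u n) 2 μ)
    (ho : ∀ m n, ∫ x, u m x * conj (u n x) ∂μ = if m = n then 1 else 0)
    {lam : ι → ℝ} (hlam : ∀ n, lam n ≤ 1) :
    (∫ x, ∑ n, lam n * ‖u n x‖ ^ 2 ∂μ) - 1 ≤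
      ∑ n, lam n * ∫ x, ‖u n x - ⨍ y, u n y ∂μ‖ ^ 2 ∂μ := by
  have h_mean : ∑ n, lam n * (‖∫ x, u n x ∂μ‖ ^ 2 / μ.real Set.univ) ≤ 1 :=
    calc ∑ n, lam n * (‖∫ x, u n x ∂μ‖ ^ 2 / μ.real Set.univ)
        ≤ ∑ n, ‖∫ x, u n x ∂μ‖ ^ 2 / μ.real Set.univ :=
          Finset.sum_le_sum fun n _ => mul_le_of_le_one_left (by positivity) (hlam n)
      _ ≤ 1 := by
          rw [← Finset.sum_div]
          exact div_le_one_of_le₀ (sum_sq_norm_integral_le_measureReal_univ hu ho)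
            measureReal_nonneg
  rw [integral_finsetSum _ fun n _ => (hu n).integrable_norm_pow'.const_mul (lam n)]
  simp only [integral_const_mul, integral_sq_norm_sub_average (hu _), mul_sub,
    Finset.sum_sub_distrib]
  linarith

end Orthonormal

lemma integrableOn_of_continuous_of_isBounded {X F : Type*} [PseudoMetricSpace X] [ProperSpace X]
    [MeasurableSpace X] [OpensMeasurableSpace X] {μ : Measure X} [IsFiniteMeasureOnCompacts μ]
    [NormedAddCommGroup F] {f : X → F} {K : Set X} (hf : Continuous f)
    (hKb : Bornology.IsBounded K) : IntegrableOn f K μ :=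
  (hf.continuousOn.integrableOn_compact' hKb.isCompact_closure
    isClosed_closure.measurableSet).mono_set subset_closure

section Poincare

variable {E F : Type*} [NormedAddCommGroup E] [NormedSpace ℝ E] [NormedAddCommGroup F]
  [NormedSpace ℝ F] {f : E → F}

lemma sq_enorm_sub_le_lintegral_sq_enorm_fderiv (hf : ContDiff ℝ 1 f) (x y : E) :
    ‖f x - f y‖ₑ ^ 2 ≤
      edist x y ^ 2 * ∫⁻ t in Set.Icc (0 : ℝ) 1, ‖fderiv ℝ f (lineMap y x t)‖ₑ ^ 2 := by
  have h_line : ContDiff ℝ 1 fun t : ℝ => f (lineMap y x t) :=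
    hf.comp (AffineMap.contDiff_lineMap y x)
  have h_deriv (t : ℝ) :
      deriv (fun t => f (lineMap y x t)) t = fderiv ℝ f (lineMap y x t) (x - y) :=
    ((hf.differentiable one_ne_zero _).hasFDerivAt.comp_hasDerivAt t
      AffineMap.hasDerivAt_lineMap).deriv
  have h_cont : Continuous fun t : ℝ => fderiv ℝ f (lineMap y x t) :=
    (hf.continuous_fderiv one_ne_zero).comp (by fun_prop)
  have h_ftc : ‖f x - f y‖ₑ ≤
      edist x y * ∫⁻ t in Set.Icc (0 : ℝ) 1, ‖fderiv ℝ f (lineMap y x t)‖ₑ := by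
    have h := enorm_sub_le_lintegral_deriv_of_contDiffOn_Icc h_line.contDiffOn zero_le_one
    simp only [AffineMap.lineMap_apply_zero, AffineMap.lineMap_apply_one, h_deriv] at h
    rw [← lintegral_const_mul _ h_cont.enorm.measurable, edist_eq_enorm_sub]
    exact h.trans (lintegral_mono fun t =>
      (ContinuousLinearMap.le_opENorm _ _).trans_eq (mul_comm _ _))
  calc ‖f x - f y‖ₑ ^ 2
      ≤ (edist x y * ∫⁻ t in Set.Icc (0 : ℝ) 1, ‖fderiv ℝ f (lineMap y x t)‖ₑ) ^ 2 := by gcongr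
    _ = edist x y ^ 2 * (∫⁻ t in Set.Icc (0 : ℝ) 1, ‖fderiv ℝ f (lineMap y x t)‖ₑ) ^ 2 :=
      mul_pow _ _ _
    _ ≤ edist x y ^ 2 * ∫⁻ t in Set.Icc (0 : ℝ) 1, ‖fderiv ℝ f (lineMap y x t)‖ₑ ^ 2 := by
      gcongr
      simpa using sq_lintegral_le_measure_univ_mul
        (μ := volume.restrict (Set.Icc (0 : ℝ) 1)) h_cont.enorm.aemeasurable

variable [FiniteDimensional ℝ E] [MeasurableSpace E] [BorelSpace E] {μ : Measure E}
  [μ.IsAddHaarMeasure] {K : Set E}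

lemma setLIntegral_lineMap_le (hK : Convex ℝ K) (hKm : MeasurableSet K) (g : E → ℝ≥0∞) {y : E}
    (hy : y ∈ K) {t : ℝ} (ht₀ : 0 < t) (ht₁ : t ≤ 1) :
    ∫⁻ x in K, g (lineMap y x t) ∂μ ≤ ENNReal.ofReal (t ^ finrank ℝ E)⁻¹ * ∫⁻ x in K, g x ∂μ := by
  have h_deriv (x : E) :
      HasFDerivAt (AffineMap.homothety y t) (t • ContinuousLinearMap.id ℝ E) x :=
    (((hasFDerivAt_id x).sub_const y).const_smul t).add_const y
  have h_det : (t • ContinuousLinearMap.id ℝ E).det = t ^ finrank ℝ E := by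
    simp [ContinuousLinearMap.det]
  have h_image : AffineMap.homothety y t '' K ⊆ K := by
    rintro _ ⟨x, hx, rfl⟩
    exact hK.lineMap_mem hy hx ⟨ht₀.le, ht₁⟩
  have h_scale : ENNReal.ofReal (t ^ finrank ℝ E) * ∫⁻ x in K, g (lineMap y x t) ∂μ ≤
      ∫⁻ x in K, g x ∂μ :=
    calc ENNReal.ofReal (t ^ finrank ℝ E) * ∫⁻ x in K, g (lineMap y x t) ∂μ
        = ∫⁻ x in AffineMap.homothety y t '' K, g x ∂μ := by
          rw [lintegral_image_eq_lintegral_abs_det_fderiv_mul μ hKm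
            (fun x _ => (h_deriv x).hasFDerivWithinAt)
            (AffineMap.homothety_injective y ht₀.ne').injOn, h_det, abs_of_pos (by positivity),
            lintegral_const_mul' _ _ ENNReal.ofReal_ne_top]
          rfl
      _ ≤ ∫⁻ x in K, g x ∂μ := lintegral_mono_set h_image
  rwa [ENNReal.ofReal_inv_of_pos (by positivity), ← ENNReal.mul_le_iff_le_inv
    (by positivity) ENNReal.ofReal_ne_top]

lemma lintegral_lintegral_lineMap_le (hK : Convex ℝ K) (hKm : MeasurableSet K) {g : E → ℝ≥0∞}
    (hg : Measurable g) {t : ℝ} (ht : t ∈ Set.Icc (0 : ℝ) 1) :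
    ∫⁻ x in K, ∫⁻ y in K, g (lineMap y x t) ∂μ ∂μ ≤
      2 ^ finrank ℝ E * μ K * ∫⁻ x in K, g x ∂μ := by
  have h_half {s : ℝ} (hs : 1 / 2 ≤ s) (hs₁ : s ≤ 1) :
      ∫⁻ x in K, ∫⁻ y in K, g (lineMap x y s) ∂μ ∂μ ≤
        2 ^ finrank ℝ E * μ K * ∫⁻ x in K, g x ∂μ := by
    have hs₀ : 0 < s := by linarith
    have h_const : ENNReal.ofReal (s ^ finrank ℝ E)⁻¹ ≤ 2 ^ finrank ℝ E := by
      rw [← ENNReal.ofReal_ofNat, ← ENNReal.ofReal_pow zero_le_two, ← inv_pow]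
      gcongr
      exact inv_le_of_inv_le₀ two_pos (by linarith)
    calc ∫⁻ x in K, ∫⁻ y in K, g (lineMap x y s) ∂μ ∂μ
        ≤ ∫⁻ _ in K, 2 ^ finrank ℝ E * ∫⁻ y in K, g y ∂μ ∂μ :=
          setLIntegral_mono' hKm fun x hx =>
            (setLIntegral_lineMap_le hK hKm g hx hs₀ hs₁).trans (by gcongr)
      _ = 2 ^ finrank ℝ E * μ K * ∫⁻ x in K, g x ∂μ := by
          rw [setLIntegral_const, mul_right_comm]
  rcases le_total t (1 / 2) with h | h
  · simpa only [AffineMap.lineMap_apply_one_sub] using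
      h_half (s := 1 - t) (by linarith) (by linarith [ht.1])
  · rw [lintegral_lintegral_swap]
    · exact h_half h ht.2
    · refine (hg.comp ?_).aemeasurable
      simp only [AffineMap.lineMap_apply_module]
      fun_prop

lemma lintegral_lintegral_sq_enorm_sub_le (hK : Convex ℝ K) (hKm : MeasurableSet K)
    (hf : ContDiff ℝ 1 f) :
    ∫⁻ x in K, ∫⁻ y in K, ‖f x - f y‖ₑ ^ 2 ∂μ ∂μ ≤
      2 ^ finrank ℝ E * μ K * (Metric.ediam K ^ 2 * ∫⁻ x in K, ‖fderiv ℝ f x‖ₑ ^ 2 ∂μ) := by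
  have h_meas : Measurable fun x => ‖fderiv ℝ f x‖ₑ ^ 2 :=
    (hf.continuous_fderiv one_ne_zero).enorm.measurable.pow_const 2
  let g : E → ℝ≥0∞ := fun x => Metric.ediam K ^ 2 * ‖fderiv ℝ f x‖ₑ ^ 2
  have hg : Measurable g := h_meas.const_mul _
  have h_line (x : E) (hx : x ∈ K) (y : E) (hy : y ∈ K) :
      ‖f x - f y‖ₑ ^ 2 ≤ ∫⁻ t in Set.Icc (0 : ℝ) 1, g (lineMap y x t) := by
    refine (sq_enorm_sub_le_lintegral_sq_enorm_fderiv hf x y).trans ?_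
    rw [← lintegral_const_mul' _ _ (by finiteness)]
    refine lintegral_mono fun t => mul_le_mul_left ?_ _
    gcongr
    exact Metric.edist_le_ediam_of_mem hx hy
  calc ∫⁻ x in K, ∫⁻ y in K, ‖f x - f y‖ₑ ^ 2 ∂μ ∂μ
      ≤ ∫⁻ x in K, ∫⁻ y in K, (∫⁻ t in Set.Icc (0 : ℝ) 1, g (lineMap y x t)) ∂μ ∂μ :=
        setLIntegral_mono' hKm fun x hx => setLIntegral_mono' hKm (h_line x hx)
    _ = ∫⁻ t in Set.Icc (0 : ℝ) 1, ∫⁻ x in K, ∫⁻ y in K, g (lineMap y x t) ∂μ ∂μ := by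
        have h_joint : Measurable fun p : (E × ℝ) × E => g (lineMap p.2 p.1.1 p.1.2) := by
          refine hg.comp ?_
          simp only [AffineMap.lineMap_apply_module]
          fun_prop
        have h_inner (x : E) : ∫⁻ y in K, (∫⁻ t in Set.Icc (0 : ℝ) 1, g (lineMap y x t)) ∂μ =
            ∫⁻ t in Set.Icc (0 : ℝ) 1, ∫⁻ y in K, g (lineMap y x t) ∂μ :=
          lintegral_lintegral_swap (h_joint.comp
            (f := fun p : E × ℝ => ((x, p.2), p.1)) (by fun_prop)).aemeasurable
        simp only [h_inner]
        exact lintegral_lintegral_swap h_joint.lintegral_prod_right'.aemeasurable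
    _ ≤ ∫⁻ _ in Set.Icc (0 : ℝ) 1, 2 ^ finrank ℝ E * μ K * ∫⁻ x in K, g x ∂μ :=
        setLIntegral_mono' measurableSet_Icc fun t ht =>
          lintegral_lintegral_lineMap_le hK hKm hg ht
    _ = 2 ^ finrank ℝ E * μ K *
          (Metric.ediam K ^ 2 * ∫⁻ x in K, ‖fderiv ℝ f x‖ₑ ^ 2 ∂μ) := by
        rw [setLIntegral_const, Real.volume_Icc, lintegral_const_mul _ h_meas]
        simp

theorem setLIntegral_sq_enorm_sub_setAverage_le [CompleteSpace F] (hK : Convex ℝ K)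
    (hKm : MeasurableSet K) (hKμ : μ K ≠ ∞) (hf : ContDiff ℝ 1 f) (hfK : IntegrableOn f K μ) :
    ∫⁻ x in K, ‖f x - ⨍ y in K, f y ∂μ‖ₑ ^ 2 ∂μ ≤
      2 ^ finrank ℝ E * Metric.ediam K ^ 2 * ∫⁻ x in K, ‖fderiv ℝ f x‖ₑ ^ 2 ∂μ := by
  rcases eq_or_ne (μ K) 0 with hK₀ | hK₀
  · simp [Measure.restrict_eq_zero.2 hK₀]
  have : IsFiniteMeasure (μ.restrict K) := isFiniteMeasure_restrict.2 hKμ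
  have h_mean (x : E) :
      μ K * ‖f x - ⨍ y in K, f y ∂μ‖ₑ ^ 2 ≤ ∫⁻ y in K, ‖f x - f y‖ₑ ^ 2 ∂μ := by
    simpa using measure_univ_mul_sq_enorm_sub_average_le hfK (f x)
  rw [← ENNReal.mul_le_mul_iff_right hK₀ hKμ, ← lintegral_const_mul' _ _ hKμ]
  calc ∫⁻ x in K, μ K * ‖f x - ⨍ y in K, f y ∂μ‖ₑ ^ 2 ∂μ
      ≤ ∫⁻ x in K, ∫⁻ y in K, ‖f x - f y‖ₑ ^ 2 ∂μ ∂μ := lintegral_mono h_mean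
    _ ≤ 2 ^ finrank ℝ E * μ K * (Metric.ediam K ^ 2 * ∫⁻ x in K, ‖fderiv ℝ f x‖ₑ ^ 2 ∂μ) :=
        lintegral_lintegral_sq_enorm_sub_le hK hKm hf
    _ = μ K * (2 ^ finrank ℝ E * Metric.ediam K ^ 2 * ∫⁻ x in K, ‖fderiv ℝ f x‖ₑ ^ 2 ∂μ) := by
        ring

theorem setIntegral_sq_norm_sub_setAverage_le [CompleteSpace F] (hK : Convex ℝ K)
    (hKm : MeasurableSet K) (hKb : Bornology.IsBounded K) (hf : ContDiff ℝ 1 f) :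
    ∫ x in K, ‖f x - ⨍ y in K, f y ∂μ‖ ^ 2 ∂μ ≤
      2 ^ finrank ℝ E * Metric.diam K ^ 2 * ∫ x in K, ‖fderiv ℝ f x‖ ^ 2 ∂μ := by
  have poincare := setLIntegral_sq_enorm_sub_setAverage_le hK hKm hKb.measure_lt_top.ne hf
    (integrableOn_of_continuous_of_isBounded (μ := μ) hf.continuous hKb)
  have h_dev : IntegrableOn (fun x => ‖f x - ⨍ y in K, f y ∂μ‖ ^ 2) K μ :=
    integrableOn_of_continuous_of_isBounded
      ((hf.continuous.sub continuous_const).norm.pow 2) hKb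
  have h_grad : IntegrableOn (fun x => ‖fderiv ℝ f x‖ ^ 2) K μ :=
    integrableOn_of_continuous_of_isBounded ((hf.continuous_fderiv one_ne_zero).norm.pow 2) hKb
  refine (ENNReal.ofReal_le_ofReal_iff (by positivity)).1 ?_
  rw [ENNReal.ofReal_mul (by positivity), ENNReal.ofReal_mul (by positivity),
    ENNReal.ofReal_pow zero_le_two, ENNReal.ofReal_ofNat, ENNReal.ofReal_pow Metric.diam_nonneg,
    Metric.diam, ENNReal.ofReal_toReal hKb.ediam_ne_top]
  rwa [ofReal_integral_sq_norm h_dev, ofReal_integral_sq_norm h_grad]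

end Poincare

section Gradient

lemma sq_opNorm_le_sum_sq_norm_apply {𝕜 ι E F : Type*} [RCLike 𝕜] [Fintype ι]
    [NormedAddCommGroup E] [InnerProductSpace 𝕜 E] [NormedAddCommGroup F] [NormedSpace 𝕜 F]
    (b : OrthonormalBasis ι 𝕜 E) (L : E →L[𝕜] F) : ‖L‖ ^ 2 ≤ ∑ i, ‖L (b i)‖ ^ 2 := by
  refine Real.le_sqrt (norm_nonneg _) (by positivity) |>.1 <|
    L.opNorm_le_bound (by positivity) fun v => ?_
  calc ‖L v‖ = ‖∑ i, b.repr v i • L (b i)‖ := by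
        simp only [← map_smul, ← map_sum, b.sum_repr]
    _ ≤ ∑ i, ‖L (b i)‖ * ‖b.repr v i‖ := by
        refine (norm_sum_le _ _).trans_eq ?_
        simp only [norm_smul, mul_comm]
    _ ≤ √(∑ i, ‖L (b i)‖ ^ 2) * √(∑ i, ‖b.repr v i‖ ^ 2) := Real.sum_mul_le_sqrt_mul_sqrt _ _ _
    _ = √(∑ i, ‖L (b i)‖ ^ 2) * ‖v‖ := by
        rw [← EuclideanSpace.norm_eq, b.repr.norm_map]

variable {d : ℕ} {f : EuclideanSpace ℝ (Fin d) → ℂ}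

lemma sq_norm_fderiv_le_gradSq (x : EuclideanSpace ℝ (Fin d)) :
    ‖fderiv ℝ f x‖ ^ 2 ≤ gradSq f x := by
  simpa [gradSq] using
    sq_opNorm_le_sum_sq_norm_apply (EuclideanSpace.basisFun (Fin d) ℝ) (fderiv ℝ f x)

lemma continuous_gradSq (hf : ContDiff ℝ 1 f) : Continuous (gradSq f) := by
  have := hf.continuous_fderiv one_ne_zero
  unfold gradSq
  fun_prop

lemma setIntegral_sq_norm_sub_setAverage_le_gradSq {K : Set (EuclideanSpace ℝ (Fin d))}
    (hK : Convex ℝ K) (hKm : MeasurableSet K) (hKb : Bornology.IsBounded K)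
    (hf : ContDiff ℝ 1 f) :
    ∫ x in K, ‖f x - ⨍ y in K, f y‖ ^ 2 ≤ 2 ^ d * Metric.diam K ^ 2 * ∫ x in K, gradSq f x := by
  have h_int : IntegrableOn (fun x => ‖fderiv ℝ f x‖ ^ 2) K :=
    integrableOn_of_continuous_of_isBounded ((hf.continuous_fderiv one_ne_zero).norm.pow 2) hKb
  calc ∫ x in K, ‖f x - ⨍ y in K, f y‖ ^ 2
      ≤ 2 ^ d * Metric.diam K ^ 2 * ∫ x in K, ‖fderiv ℝ f x‖ ^ 2 := by
        simpa using setIntegral_sq_norm_sub_setAverage_le (μ := volume) hK hKm hKb hf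
    _ ≤ 2 ^ d * Metric.diam K ^ 2 * ∫ x in K, gradSq f x := by
        refine mul_le_mul_of_nonneg_left (setIntegral_mono h_int ?_ sq_norm_fderiv_le_gradSq)
          (by positivity)
        exact integrableOn_of_continuous_of_isBounded (continuous_gradSq hf) hKb

end Gradient

lemma exists_mul_measure_ball_rpow_eq {E : Type*} [NormedAddCommGroup E] [NormedSpace ℝ E]
    [FiniteDimensional ℝ E] [Nontrivial E] [MeasurableSpace E] [BorelSpace E] (μ : Measure E)
    [μ.IsAddHaarMeasure] (p : ℝ) :
    ∃ C : ℝ, 0 < C ∧ ∀ (c : E) (r : ℝ), 0 < r →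
      C * (μ (Metric.ball c r)).toReal ^ (p / finrank ℝ E) = (2 * r) ^ p := by
  set ω := (μ (Metric.ball 0 1)).toReal
  have hω : 0 < ω :=
    ENNReal.toReal_pos (Metric.measure_ball_pos _ _ one_pos).ne' measure_ball_lt_top.ne
  refine ⟨2 ^ p / ω ^ (p / finrank ℝ E), by positivity, fun c r hr => ?_⟩
  have h_dim : (finrank ℝ E : ℝ) ≠ 0 := Nat.cast_ne_zero.2 Module.finrank_pos.ne'
  rw [Measure.addHaar_ball_of_pos μ c hr, ENNReal.toReal_mul,
    ENNReal.toReal_ofReal (by positivity), Real.mul_rpow (by positivity) hω.le,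
    ← Real.rpow_natCast_mul hr.le, mul_div_cancel₀ _ h_dim, Real.mul_rpow zero_le_two hr.le]
  field_simp

theorem local_exclusion_general {d : ℕ} {K : Set (EuclideanSpace ℝ (Fin d))} (hK : Convex ℝ K)
    (hKm : MeasurableSet K) (hKb : Bornology.IsBounded K) {D : ℝ} (hD : 0 < D)
    (hKD : Metric.diam K ≤ D) {ι : Type*} [Fintype ι] [DecidableEq ι]
    {u : ι → EuclideanSpace ℝ (Fin d) → ℂ} {lam : ι → ℝ} (hu : ∀ n, ContDiff ℝ 1 (u n))
    (ho : ∀ m n, ∫ x in K, u m x * conj (u n x) = if m = n then 1 else 0)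
    (hlam : ∀ n, 0 ≤ lam n ∧ lam n ≤ 1) :
    1 / (2 ^ d * D ^ 2) * ((∫ x in K, ∑ n, lam n * ‖u n x‖ ^ 2) - 1) ≤
      ∑ n, lam n * ∫ x in K, gradSq (u n) x := by
  have : IsFiniteMeasure (volume.restrict K) := isFiniteMeasure_restrict.2 hKb.measure_lt_top.ne
  have h_cont (n) : Continuous (u n) := (hu n).continuous
  have h_memLp (n) : MemLp (u n) 2 (volume.restrict K) :=
    (memLp_two_iff_integrable_sq_norm (h_cont n).aestronglyMeasurable).2 <|
      integrableOn_of_continuous_of_isBounded ((h_cont n).norm.pow 2) hKb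
  have h_nonneg (n) : 0 ≤ ∫ x in K, gradSq (u n) x :=
    integral_nonneg fun x => (sq_nonneg _).trans (sq_norm_fderiv_le_gradSq x)
  rw [one_div, inv_mul_le_iff₀ (by positivity), Finset.mul_sum]
  calc (∫ x in K, ∑ n, lam n * ‖u n x‖ ^ 2) - 1
      ≤ ∑ n, lam n * ∫ x in K, ‖u n x - ⨍ y in K, u n y‖ ^ 2 :=
        integral_sum_mul_sq_norm_sub_one_le h_memLp ho fun n => (hlam n).2
    _ ≤ ∑ n, lam n * (2 ^ d * D ^ 2 * ∫ x in K, gradSq (u n) x) := by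
        gcongr with n
        · exact (hlam n).1
        refine (setIntegral_sq_norm_sub_setAverage_le_gradSq hK hKm hKb (hu n)).trans ?_
        gcongr
        exact h_nonneg n
    _ = ∑ n, 2 ^ d * D ^ 2 * (lam n * ∫ x in K, gradSq (u n) x) := by
        simp only [mul_left_comm]

/-- **Local exclusion principle**: for a finite family of `C¹` functions, orthonormal
in `L²(B)` on an open ball `B`, with coefficients `λₙ ∈ [0,1]`,
`Σₙ λₙ ∫_B |∇uₙ|² ≥ (C_d |B|^{2/d})⁻¹ (∫_B ρ − 1)`. -/
theorem local_exclusion (d : ℕ) (hd : 1 ≤ d) :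
    ∃ C : ℝ, 0 < C ∧
      ∀ (c : EuclideanSpace ℝ (Fin d)) (r : ℝ), 0 < r →
      ∀ (N : ℕ) (u : Fin N → EuclideanSpace ℝ (Fin d) → ℂ) (lam : Fin N → ℝ),
        (∀ n, ContDiff ℝ 1 (u n)) →
        (∀ m n : Fin N,
          ∫ x in Metric.ball c r, u m x * (starRingEnd ℂ) (u n x)
            = if m = n then 1 else 0) →
        (∀ n, 0 ≤ lam n ∧ lam n ≤ 1) →
        ∑ n, lam n * ∫ x in Metric.ball c r, gradSq (u n) x
          ≥ (1 / (C * (volume (Metric.ball c r)).toReal ^ (2 / (d : ℝ)))) *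
              ((∫ x in Metric.ball c r, ∑ n, lam n * ‖u n x‖ ^ 2) - 1) := by
  have : NeZero d := ⟨Nat.one_le_iff_ne_zero.1 hd⟩
  obtain ⟨C, hC, hCB⟩ :=
    exists_mul_measure_ball_rpow_eq (volume : Measure (EuclideanSpace ℝ (Fin d))) 2
  simp only [finrank_euclideanSpace_fin, Real.rpow_two] at hCB
  refine ⟨2 ^ d * C, by positivity, fun c r hr N u lam hu ho hlam => ?_⟩
  rw [mul_assoc, hCB c r hr]
  exact local_exclusion_general (convex_ball c r) measurableSet_ball Metric.isBounded_ball
    (by positivity) (Metric.diam_ball hr.le) hu ho hlam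
end

section
/- For every integer d ≥ 1 there exists a constant K > 0 depending only on d such that: for every finite family u_1, …, u_N of continuously differentiable, compactly supported functions from ℝ^d to ℂ and every choice of coefficients λ_1, …, λ_N ≥ 0 with ∫_{ℝ^d} ρ > 0, where ρ(x) = Σ_{n=1}^N λ_n |u_n(x)|², one has Σ_{n=1}^N λ_n ∫_{ℝ^d} |∇u_n(x)|² dx ≥ K (∫_{ℝ^d} ρ(x) dx)^{−2/d} ∫_{ℝ^d} ρ(x)^{1+2/d} dx. (No orthogonality is required; this combines the Hoffmann-Ostenhof inequality with the Sobolev-type uncertainty principle applied to √ρ.) -/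
open MeasureTheory
open scoped BigOperators

/-!
With `U = (√λₙ uₙ)ₙ`, a function with values in a Hilbert space, one has `ρ = ‖U‖²` and
`‖DU‖² ≤ ∑ₙ λₙ |∇uₙ|²`. The bound is therefore the mass-critical Gagliardo–Nirenberg inequality
`∫ ‖U‖^(2 + 4/d) ≤ C (∫ ‖U‖²)^(2/d) ∫ ‖DU‖²`, with a constant independent of the codomain; working
with `U` avoids differentiating `√ρ` at its zeros. For `d ≥ 3` it follows by Hölder interpolation
from the Sobolev inequality. For `d ≤ 2`, the Sobolev inequality for `W^{1,1}` is applied to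
`‖U‖²`, whose derivative satisfies `∫ ‖D‖U‖²‖ ≤ 2 (∫ ‖U‖²)^(1/2) (∫ ‖DU‖²)^(1/2)`.
-/

open Module
open scoped ENNReal NNReal

universe u v w

section OperatorNorm

variable {E F : Type*} [NormedAddCommGroup E] [NormedAddCommGroup F] [NormedSpace ℝ F]

lemma opNorm_sq_le_of_forall_norm_apply_sq_le [NormedSpace ℝ E] {L : E →L[ℝ] F} {c : ℝ}
    (hc : 0 ≤ c) (hL : ∀ v, ‖L v‖ ^ 2 ≤ c * ‖v‖ ^ 2) : ‖L‖ ^ 2 ≤ c := by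
  refine (Real.le_sqrt (norm_nonneg L) hc).mp (L.opNorm_le_bound (Real.sqrt_nonneg c) fun v ↦ ?_)
  calc ‖L v‖ ≤ √(c * ‖v‖ ^ 2) := Real.le_sqrt_of_sq_le (hL v)
    _ = √c * ‖v‖ := by rw [Real.sqrt_mul hc, Real.sqrt_sq (norm_nonneg v)]

lemma opNorm_sq_le_sum_norm_apply_sq [InnerProductSpace ℝ E] {ι : Type*} [Fintype ι]
    (b : OrthonormalBasis ι ℝ E) (L : E →L[ℝ] F) : ‖L‖ ^ 2 ≤ ∑ i, ‖L (b i)‖ ^ 2 := by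
  refine opNorm_sq_le_of_forall_norm_apply_sq_le (by positivity) fun v ↦ ?_
  have triangle : ‖L v‖ ≤ ∑ i, ‖L (b i)‖ * ‖inner ℝ (b i) v‖ := by
    conv_lhs => rw [← b.sum_repr' v, map_sum]
    refine (norm_sum_le _ _).trans (Finset.sum_le_sum fun i _ ↦ ?_)
    rw [map_smul, norm_smul, mul_comm]
  calc ‖L v‖ ^ 2 ≤ (∑ i, ‖L (b i)‖ * ‖inner ℝ (b i) v‖) ^ 2 := by gcongr
    _ ≤ (∑ i, ‖L (b i)‖ ^ 2) * ∑ i, ‖inner ℝ (b i) v‖ ^ 2 :=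
      Finset.sum_mul_sq_le_sq_mul_sq _ _ _
    _ = (∑ i, ‖L (b i)‖ ^ 2) * ‖v‖ ^ 2 := by rw [b.sum_sq_norm_inner_right]

end OperatorNorm

section Lintegral

variable {α : Type*} [MeasurableSpace α] {μ : Measure α} {f g : α → ℝ≥0∞}

lemma sq_lintegral_mul_le (hf : AEMeasurable f μ) (hg : AEMeasurable g μ) :
    (∫⁻ x, f x * g x ∂μ) ^ 2 ≤ (∫⁻ x, f x ^ 2 ∂μ) * ∫⁻ x, g x ^ 2 ∂μ := by
  have holder := ENNReal.rpow_le_rpow (z := 2)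
    (ENNReal.lintegral_mul_le_Lp_mul_Lq μ Real.HolderConjugate.two_two hf hg) zero_le_two
  rw [ENNReal.mul_rpow_of_nonneg _ _ zero_le_two, ← ENNReal.rpow_mul, ← ENNReal.rpow_mul] at holder
  simpa using holder

lemma lintegral_rpow_le_interpolation (hf : AEMeasurable f μ) {n : ℝ} (hn : 2 < n) :
    ∫⁻ x, f x ^ (2 + 4 / n) ∂μ ≤
      (∫⁻ x, f x ^ 2 ∂μ) ^ (2 / n) * (∫⁻ x, f x ^ (2 * n / (n - 2)) ∂μ) ^ ((n - 2) / n) := by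
  have hn_sub : 0 < n - 2 := by linarith
  calc ∫⁻ x, f x ^ (2 + 4 / n) ∂μ
      = ∫⁻ x, (f x ^ 2) ^ (2 / n) * (f x ^ (2 * n / (n - 2))) ^ ((n - 2) / n) ∂μ := by
        refine lintegral_congr fun x ↦ ?_
        rw [← ENNReal.rpow_two, ← ENNReal.rpow_mul, ← ENNReal.rpow_mul,
          ← ENNReal.rpow_add_of_nonneg _ _ (by positivity) (by positivity)]
        congr 1
        field_simp
        ring
    _ ≤ _ := ENNReal.lintegral_mul_norm_pow_le (hf.pow_const _) (hf.pow_const _)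
        (by positivity) (by positivity) (by field_simp; ring)

end Lintegral

section NormSq

variable {E F : Type*} [NormedAddCommGroup F] {U : E → F}

lemma hasCompactSupport_norm_sq [TopologicalSpace E] (hU : HasCompactSupport U) :
    HasCompactSupport fun x ↦ ‖U x‖ ^ 2 :=
  hU.comp_left (g := fun v ↦ ‖v‖ ^ 2) (by simp)

variable [NormedAddCommGroup E] [NormedSpace ℝ E] [InnerProductSpace ℝ F]

lemma enorm_fderiv_norm_sq_le {x : E} (hU : DifferentiableAt ℝ U x) :
    ‖fderiv ℝ (fun y ↦ ‖U y‖ ^ 2) x‖ₑ ≤ 2 * (‖U x‖ₑ * ‖fderiv ℝ U x‖ₑ) := by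
  have bound : ‖fderiv ℝ (fun y ↦ ‖U y‖ ^ 2) x‖ ≤ 2 * (‖U x‖ * ‖fderiv ℝ U x‖) := by
    rw [hU.hasFDerivAt.norm_sq.fderiv, ← Nat.cast_smul_eq_nsmul ℝ, norm_smul]
    simpa using (innerSL ℝ (U x)).opNorm_comp_le (fderiv ℝ U x)
  simpa [ENNReal.ofReal_mul] using ENNReal.ofReal_le_ofReal bound

lemma sq_lintegral_enorm_fderiv_norm_sq_le [MeasurableSpace E] [BorelSpace E] (μ : Measure E)
    (hU : ContDiff ℝ 1 U) :
    (∫⁻ x, ‖fderiv ℝ (fun y ↦ ‖U y‖ ^ 2) x‖ₑ ∂μ) ^ 2 ≤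
      4 * ((∫⁻ x, ‖U x‖ₑ ^ 2 ∂μ) * ∫⁻ x, ‖fderiv ℝ U x‖ₑ ^ 2 ∂μ) := by
  have meas_U : Measurable fun x ↦ ‖U x‖ₑ := hU.continuous.enorm.measurable
  have meas_fderiv : Measurable fun x ↦ ‖fderiv ℝ U x‖ₑ :=
    (hU.continuous_fderiv one_ne_zero).enorm.measurable
  calc (∫⁻ x, ‖fderiv ℝ (fun y ↦ ‖U y‖ ^ 2) x‖ₑ ∂μ) ^ 2
      ≤ (∫⁻ x, 2 * (‖U x‖ₑ * ‖fderiv ℝ U x‖ₑ) ∂μ) ^ 2 := by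
        gcongr with x
        exact enorm_fderiv_norm_sq_le (hU.differentiable one_ne_zero x)
    _ = 4 * (∫⁻ x, ‖U x‖ₑ * ‖fderiv ℝ U x‖ₑ ∂μ) ^ 2 := by
        rw [lintegral_const_mul _ (by fun_prop), mul_pow]
        norm_num
    _ ≤ _ := by
        gcongr
        exact sq_lintegral_mul_le meas_U.aemeasurable meas_fderiv.aemeasurable

end NormSq

section DimensionOne

variable {E : Type*} [NormedAddCommGroup E] [NormedSpace ℝ E] [MeasurableSpace E] [BorelSpace E]
  {F : Type*} [NormedAddCommGroup F] [NormedSpace ℝ F]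

lemma enorm_le_lintegral_enorm_fderiv_map (e : ℝ ≃L[ℝ] E) {f : E → F} (hf : ContDiff ℝ 1 f)
    (hf_supp : HasCompactSupport f) (x : E) :
    ‖f x‖ₑ ≤ ‖e 1‖ₑ * ∫⁻ y, ‖fderiv ℝ f y‖ₑ ∂(volume.map e) := by
  obtain ⟨t, rfl⟩ := e.surjective x
  have chain_rule (s : ℝ) : HasDerivAt (f ∘ e) (fderiv ℝ f (e s) (e 1)) s :=
    (hf.differentiable one_ne_zero (e s)).hasFDerivAt.comp_hasDerivAt s
      (e : ℝ →L[ℝ] E).hasDerivAt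
  have meas : Measurable fun y ↦ ‖fderiv ℝ f y‖ₑ :=
    (hf.continuous_fderiv one_ne_zero).enorm.measurable
  calc ‖f (e t)‖ₑ ≤ ∫⁻ s in Set.Iic t, ‖deriv (f ∘ e) s‖ₑ :=
        (hf_supp.comp_homeomorph e.toHomeomorph).enorm_le_lintegral_Ici_deriv
          (hf.comp e.contDiff) t
    _ ≤ ∫⁻ s, ‖deriv (f ∘ e) s‖ₑ := setLIntegral_le_lintegral _ _
    _ ≤ ∫⁻ s, ‖e 1‖ₑ * ‖fderiv ℝ f (e s)‖ₑ := by
        refine lintegral_mono fun s ↦ ?_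
        rw [(chain_rule s).deriv, mul_comm]
        exact (fderiv ℝ f (e s)).le_opENorm (e 1)
    _ = ‖e 1‖ₑ * ∫⁻ y, ‖fderiv ℝ f y‖ₑ ∂(volume.map e) := by
        rw [lintegral_map meas e.continuous.measurable,
          lintegral_const_mul' _ _ enorm_ne_top]

lemma exists_enorm_le_lintegral_enorm_fderiv (μ : Measure E) [μ.IsAddHaarMeasure]
    (hE : finrank ℝ E = 1) :
    ∃ C : ℝ≥0, ∀ f : E → F, ContDiff ℝ 1 f → HasCompactSupport f →
      ∀ x, ‖f x‖ₑ ≤ C * ∫⁻ y, ‖fderiv ℝ f y‖ₑ ∂μ := by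
  have : FiniteDimensional ℝ E := .of_finrank_eq_succ hE
  let e : ℝ ≃L[ℝ] E := .ofFinrankEq (by rw [finrank_self, hE])
  have : (volume.map e).IsAddHaarMeasure := e.isAddHaarMeasure_map volume
  refine ⟨‖e 1‖₊ * Measure.addHaarScalarFactor (volume.map e) μ, fun f hf hf_supp x ↦ ?_⟩
  have bound := enorm_le_lintegral_enorm_fderiv_map e hf hf_supp x
  rwa [Measure.isAddLeftInvariant_eq_smul (volume.map e) μ, lintegral_smul_measure,
    ENNReal.smul_def, smul_eq_mul, ← mul_assoc] at bound

end DimensionOne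

section GagliardoNirenberg

variable {E : Type u} [NormedAddCommGroup E] [NormedSpace ℝ E] [MeasurableSpace E]

/-- `C` is an admissible constant in the mass-critical Gagliardo–Nirenberg inequality on `(E, μ)`.
The codomain `F` is quantified inside, so that `C` serves all inner product spaces at once. -/
def IsGagliardoNirenbergConst (μ : Measure E) (C : ℝ≥0) : Prop :=
  ∀ (F : Type w) [NormedAddCommGroup F] [InnerProductSpace ℝ F] (U : E → F),
    ContDiff ℝ 1 U → HasCompactSupport U →
      ∫⁻ x, ‖U x‖ₑ ^ (2 + 4 / (finrank ℝ E : ℝ)) ∂μ ≤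
        C * (∫⁻ x, ‖U x‖ₑ ^ 2 ∂μ) ^ (2 / (finrank ℝ E : ℝ)) * ∫⁻ x, ‖fderiv ℝ U x‖ₑ ^ 2 ∂μ

variable [BorelSpace E] (μ : Measure E) [μ.IsAddHaarMeasure]

theorem exists_isGagliardoNirenbergConst_of_finrank_eq_one (hE : finrank ℝ E = 1) :
    ∃ C, IsGagliardoNirenbergConst.{u, w} μ C := by
  obtain ⟨C, hC⟩ := exists_enorm_le_lintegral_enorm_fderiv (F := ℝ) μ hE
  refine ⟨C ^ 2 * 4, fun F _ _ U hU hU_supp ↦ ?_⟩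
  set R := ∫⁻ x, ‖U x‖ₑ ^ 2 ∂μ
  set G := ∫⁻ x, ‖fderiv ℝ U x‖ₑ ^ 2 ∂μ
  set J := ∫⁻ x, ‖fderiv ℝ (fun y ↦ ‖U y‖ ^ 2) x‖ₑ ∂μ
  have sup_bound (x : E) : ‖U x‖ₑ ^ 2 ≤ C * J := by
    simpa using hC _ (hU.norm_sq ℝ) (hasCompactSupport_norm_sq hU_supp) x
  calc ∫⁻ x, ‖U x‖ₑ ^ (2 + 4 / (finrank ℝ E : ℝ)) ∂μ
      = ∫⁻ x, (‖U x‖ₑ ^ 2) ^ 2 * ‖U x‖ₑ ^ 2 ∂μ := by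
        refine lintegral_congr fun x ↦ ?_
        rw [hE, ← pow_mul, ← pow_add, ← ENNReal.rpow_natCast]
        norm_num
    _ ≤ ∫⁻ x, (C * J) ^ 2 * ‖U x‖ₑ ^ 2 ∂μ := by
        gcongr with x
        exact sup_bound x
    _ = C ^ 2 * J ^ 2 * R := by
        rw [lintegral_const_mul _ (hU.continuous.enorm.measurable.pow_const 2), mul_pow]
    _ ≤ C ^ 2 * (4 * (R * G)) * R := by
        gcongr
        exact sq_lintegral_enorm_fderiv_norm_sq_le μ hU
    _ = (C ^ 2 * 4 : ℝ≥0) * R ^ (2 / (finrank ℝ E : ℝ)) * G := by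
        rw [hE]
        norm_num
        ring

theorem exists_isGagliardoNirenbergConst_of_finrank_eq_two (hE : finrank ℝ E = 2) :
    ∃ C, IsGagliardoNirenbergConst.{u, w} μ C := by
  have : FiniteDimensional ℝ E := .of_finrank_eq_succ hE
  have conj : Real.HolderConjugate (finrank ℝ E) 2 := by
    rw [hE]
    exact Real.HolderConjugate.two_two
  refine ⟨lintegralPowLePowLIntegralFDerivConst μ 2 * 4, fun F _ _ U hU hU_supp ↦ ?_⟩
  have sobolev := lintegral_pow_le_pow_lintegral_fderiv μ (hU.norm_sq ℝ)
    (hasCompactSupport_norm_sq hU_supp) conj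
  simp only [enorm_pow, enorm_norm, ENNReal.rpow_ofNat] at sobolev
  calc ∫⁻ x, ‖U x‖ₑ ^ (2 + 4 / (finrank ℝ E : ℝ)) ∂μ
      = ∫⁻ x, (‖U x‖ₑ ^ 2) ^ 2 ∂μ := by
        refine lintegral_congr fun x ↦ ?_
        rw [hE, ← pow_mul, ← ENNReal.rpow_natCast]
        norm_num
    _ ≤ _ := sobolev
    _ ≤ _ := mul_le_mul_right (sq_lintegral_enorm_fderiv_norm_sq_le μ hU) _
    _ = _ := by
        rw [hE]
        norm_num
        ring

lemma lintegral_rpow_enorm_rpow_le_lintegral_sq_enorm_fderiv [FiniteDimensional ℝ E]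
    (hE : 2 < finrank ℝ E) {F : Type*} [NormedAddCommGroup F] [InnerProductSpace ℝ F] {U : E → F}
    (hU : ContDiff ℝ 1 U) (hU_supp : HasCompactSupport U) :
    (∫⁻ x, ‖U x‖ₑ ^ (2 * finrank ℝ E / (finrank ℝ E - 2) : ℝ) ∂μ) ^
        ((finrank ℝ E - 2) / finrank ℝ E : ℝ) ≤
      (eLpNormLESNormFDerivOfEqInnerConst μ 2) ^ 2 * ∫⁻ x, ‖fderiv ℝ U x‖ₑ ^ 2 ∂μ := by
  have hn : (2 : ℝ) < finrank ℝ E := by exact_mod_cast hE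
  set n := (finrank ℝ E : ℝ) with n_def
  have hn_sub : 0 < n - 2 := by linarith
  have hq : 0 < 2 * n / (n - 2) := by positivity
  lift 2 * n / (n - 2) to ℝ≥0 using hq.le with q q_def
  have sobolev := eLpNorm_le_eLpNorm_fderiv_of_eq_inner μ hU hU_supp (p := 2) (p' := q)
    one_le_two (by lia) (by rw [q_def, ← n_def]; simp; field_simp)
  have left_eq : (∫⁻ x, ‖U x‖ₑ ^ (q : ℝ) ∂μ) ^ ((n - 2) / n) = eLpNorm U q μ ^ 2 := by
    rw [← eLpNorm_nnreal_pow_eq_lintegral (by exact_mod_cast hq.ne'), ← ENNReal.rpow_mul, q_def,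
      ← ENNReal.rpow_two]
    congr 1
    field_simp
  have right_eq : eLpNorm (fderiv ℝ U) (2 : ℝ≥0) μ ^ 2 = ∫⁻ x, ‖fderiv ℝ U x‖ₑ ^ 2 ∂μ := by
    simpa using eLpNorm_nnreal_pow_eq_lintegral (f := fderiv ℝ U) (μ := μ) two_ne_zero
  rw [left_eq, ← right_eq, ← mul_pow]
  gcongr
  exact sobolev

theorem exists_isGagliardoNirenbergConst_of_two_lt_finrank (hE : 2 < finrank ℝ E) :
    ∃ C, IsGagliardoNirenbergConst.{u, w} μ C := by
  have : FiniteDimensional ℝ E := .of_finrank_pos (by lia)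
  refine ⟨eLpNormLESNormFDerivOfEqInnerConst μ 2 ^ 2, fun F _ _ U hU hU_supp ↦ ?_⟩
  calc ∫⁻ x, ‖U x‖ₑ ^ (2 + 4 / (finrank ℝ E : ℝ)) ∂μ
      ≤ _ := lintegral_rpow_le_interpolation hU.continuous.enorm.measurable.aemeasurable
        (by exact_mod_cast hE)
    _ ≤ _ := mul_le_mul_right
        (lintegral_rpow_enorm_rpow_le_lintegral_sq_enorm_fderiv μ hE hU hU_supp) _
    _ = _ := by
        rw [ENNReal.coe_pow]
        ring

theorem exists_isGagliardoNirenbergConst [FiniteDimensional ℝ E] [Nontrivial E] :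
    ∃ C, IsGagliardoNirenbergConst.{u, w} μ C := by
  have dim_pos : 0 < finrank ℝ E := finrank_pos
  obtain hE | hE | hE : finrank ℝ E = 1 ∨ finrank ℝ E = 2 ∨ 2 < finrank ℝ E := by lia
  · exact exists_isGagliardoNirenbergConst_of_finrank_eq_one μ hE
  · exact exists_isGagliardoNirenbergConst_of_finrank_eq_two μ hE
  · exact exists_isGagliardoNirenbergConst_of_two_lt_finrank μ hE

end GagliardoNirenberg

section RealIntegral

variable {E : Type*} [NormedAddCommGroup E] [MeasurableSpace E] [BorelSpace E]
  {μ : Measure E} [IsFiniteMeasureOnCompacts μ]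

lemma ofReal_integral_norm_rpow_eq_lintegral {F : Type*} [NormedAddCommGroup F] {f : E → F}
    (hf : Continuous f) (hf_supp : HasCompactSupport f) {p : ℝ} (hp : 0 < p) :
    ENNReal.ofReal (∫ x, ‖f x‖ ^ p ∂μ) = ∫⁻ x, ‖f x‖ₑ ^ p ∂μ := by
  have integrable : Integrable (fun x ↦ ‖f x‖ ^ p) μ :=
    (hf.norm.rpow_const fun _ ↦ .inr hp.le).integrable_of_hasCompactSupport
      (hf_supp.comp_left (g := fun v ↦ ‖v‖ ^ p) (by simp [hp.ne']))
  rw [ofReal_integral_eq_lintegral_ofReal integrable (.of_forall fun x ↦ by positivity)]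
  refine lintegral_congr fun x ↦ ?_
  rw [← ENNReal.ofReal_rpow_of_nonneg (norm_nonneg _) hp.le, ofReal_norm]

lemma IsGagliardoNirenbergConst.integral_rpow_le [NormedSpace ℝ E] {C : ℝ≥0}
    (hC : IsGagliardoNirenbergConst.{_, w} μ C) {F : Type w} [NormedAddCommGroup F]
    [InnerProductSpace ℝ F] {U : E → F} (hU : ContDiff ℝ 1 U) (hU_supp : HasCompactSupport U) :
    ∫ x, (‖U x‖ ^ 2) ^ (1 + 2 / (finrank ℝ E : ℝ)) ∂μ ≤
      C * (∫ x, ‖U x‖ ^ 2 ∂μ) ^ (2 / (finrank ℝ E : ℝ)) * ∫ x, ‖fderiv ℝ U x‖ ^ 2 ∂μ := by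
  have mass_eq : ENNReal.ofReal (∫ x, ‖U x‖ ^ 2 ∂μ) = ∫⁻ x, ‖U x‖ₑ ^ 2 ∂μ := by
    simpa using ofReal_integral_norm_rpow_eq_lintegral hU.continuous hU_supp two_pos
  have energy_eq :
      ENNReal.ofReal (∫ x, ‖fderiv ℝ U x‖ ^ 2 ∂μ) = ∫⁻ x, ‖fderiv ℝ U x‖ₑ ^ 2 ∂μ := by
    simpa using ofReal_integral_norm_rpow_eq_lintegral (hU.continuous_fderiv one_ne_zero)
      (hU_supp.fderiv ℝ) two_pos
  have exponent_eq (x : E) : (‖U x‖ ^ 2) ^ (1 + 2 / (finrank ℝ E : ℝ)) =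
      ‖U x‖ ^ (2 + 4 / (finrank ℝ E : ℝ)) := by
    rw [← Real.rpow_natCast_mul (norm_nonneg _)]
    ring_nf
  simp_rw [exponent_eq]
  rw [← ENNReal.ofReal_le_ofReal_iff (by positivity), ENNReal.ofReal_mul (by positivity),
    ENNReal.ofReal_mul (by positivity),
    ← ENNReal.ofReal_rpow_of_nonneg (by positivity) (by positivity),
    ofReal_integral_norm_rpow_eq_lintegral hU.continuous hU_supp (by positivity), mass_eq,
    energy_eq, ENNReal.ofReal_coe_nnreal]
  exact hC F U hU hU_supp

end RealIntegral

section WeightedTuple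

variable {ι E F : Type*} [NormedAddCommGroup F] [InnerProductSpace ℝ F]

/-- The function `x ↦ (√λₙ uₙ(x))ₙ` with values in the `ℓ²` sum of copies of `F`, whose squared
norm is the density `ρ = ∑ₙ λₙ ‖uₙ‖²`. -/
noncomputable def weightedTuple (lam : ι → ℝ) (u : ι → E → F) (x : E) :
    PiLp 2 fun _ : ι ↦ F :=
  WithLp.toLp 2 fun n ↦ √(lam n) • u n x

variable {lam : ι → ℝ} {u : ι → E → F}

lemma norm_weightedTuple_sq [Fintype ι] (hlam : ∀ n, 0 ≤ lam n) (x : E) :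
    ‖weightedTuple lam u x‖ ^ 2 = ∑ n, lam n * ‖u n x‖ ^ 2 := by
  simp [PiLp.norm_sq_eq_of_L2, weightedTuple, norm_smul, mul_pow, Real.sq_sqrt (hlam _)]

lemma hasCompactSupport_weightedTuple [Finite ι] [TopologicalSpace E] (lam : ι → ℝ)
    (hu : ∀ n, HasCompactSupport (u n)) : HasCompactSupport (weightedTuple lam u) := by
  refine .intro' (isCompact_iUnion hu) (isClosed_iUnion_of_finite fun n ↦ isClosed_tsupport (u n))
    fun x hx ↦ ?_
  simp only [Set.mem_iUnion, not_exists] at hx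
  ext n
  simp [weightedTuple, image_eq_zero_of_notMem_tsupport (hx n)]

variable [NormedAddCommGroup E] [NormedSpace ℝ E]

lemma contDiff_weightedTuple [Fintype ι] {k : WithTop ℕ∞} (lam : ι → ℝ)
    (hu : ∀ n, ContDiff ℝ k (u n)) :
    ContDiff ℝ k (weightedTuple lam u) :=
  contDiff_piLp' 2 fun n ↦ (hu n).const_smul √(lam n)

lemma fderiv_weightedTuple_apply [Finite ι] {x : E} (lam : ι → ℝ)
    (hu : ∀ n, DifferentiableAt ℝ (u n) x) (v : E) :
    fderiv ℝ (weightedTuple lam u) x v = weightedTuple lam (fun n y ↦ fderiv ℝ (u n) y v) x := by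
  have tuple_diff : DifferentiableAt ℝ (weightedTuple lam u) x :=
    (differentiableAt_piLp 2).mpr fun n ↦ (hu n).const_smul √(lam n)
  ext n
  have coord_deriv : HasFDerivAt (fun y ↦ √(lam n) • u n y)
      (PiLp.proj 2 (fun _ : ι ↦ F) n ∘L fderiv ℝ (weightedTuple lam u) x) x :=
    hasFDerivWithinAt_univ.mp
      ((hasFDerivWithinAt_piLp 2).mp tuple_diff.hasFDerivAt.hasFDerivWithinAt n)
  exact DFunLike.congr_fun (coord_deriv.unique ((hu n).hasFDerivAt.const_smul √(lam n))) v

lemma norm_fderiv_weightedTuple_sq_le [Fintype ι] {x : E} (hlam : ∀ n, 0 ≤ lam n)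
    (hu : ∀ n, DifferentiableAt ℝ (u n) x) :
    ‖fderiv ℝ (weightedTuple lam u) x‖ ^ 2 ≤ ∑ n, lam n * ‖fderiv ℝ (u n) x‖ ^ 2 := by
  have sum_nonneg : 0 ≤ ∑ n, lam n * ‖fderiv ℝ (u n) x‖ ^ 2 :=
    Finset.sum_nonneg fun n _ ↦ mul_nonneg (hlam n) (sq_nonneg _)
  refine opNorm_sq_le_of_forall_norm_apply_sq_le sum_nonneg fun v ↦ ?_
  rw [fderiv_weightedTuple_apply lam hu, norm_weightedTuple_sq hlam, Finset.sum_mul]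
  refine Finset.sum_le_sum fun n _ ↦ ?_
  rw [mul_assoc, ← mul_pow]
  gcongr
  · exact hlam n
  · exact (fderiv ℝ (u n) x).le_opNorm v

end WeightedTuple

section KineticEnergy

variable {E : Type*} [NormedAddCommGroup E] [NormedSpace ℝ E] [MeasurableSpace E] [BorelSpace E]
  {F : Type*} [NormedAddCommGroup F]

lemma integrable_norm_fderiv_sq {μ : Measure E} [IsFiniteMeasureOnCompacts μ] [NormedSpace ℝ F]
    {f : E → F} (hf : ContDiff ℝ 1 f) (hf_supp : HasCompactSupport f) :
    Integrable (fun x ↦ ‖fderiv ℝ f x‖ ^ 2) μ :=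
  ((hf.continuous_fderiv one_ne_zero).norm.pow 2).integrable_of_hasCompactSupport
    (hasCompactSupport_norm_sq (hf_supp.fderiv ℝ))

lemma integral_norm_fderiv_weightedTuple_sq_le {μ : Measure E} [IsFiniteMeasureOnCompacts μ]
    [InnerProductSpace ℝ F] {ι : Type*} [Fintype ι] {lam : ι → ℝ} {u : ι → E → F}
    (hlam : ∀ n, 0 ≤ lam n) (hu : ∀ n, ContDiff ℝ 1 (u n))
    (hu_supp : ∀ n, HasCompactSupport (u n)) :
    ∫ x, ‖fderiv ℝ (weightedTuple lam u) x‖ ^ 2 ∂μ ≤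
      ∑ n, lam n * ∫ x, ‖fderiv ℝ (u n) x‖ ^ 2 ∂μ := by
  have integrable (n : ι) : Integrable (fun x ↦ lam n * ‖fderiv ℝ (u n) x‖ ^ 2) μ :=
    (integrable_norm_fderiv_sq (hu n) (hu_supp n)).const_mul _
  calc ∫ x, ‖fderiv ℝ (weightedTuple lam u) x‖ ^ 2 ∂μ
      ≤ ∫ x, ∑ n, lam n * ‖fderiv ℝ (u n) x‖ ^ 2 ∂μ := by
        refine integral_mono (integrable_norm_fderiv_sq (contDiff_weightedTuple lam hu)
          (hasCompactSupport_weightedTuple lam hu_supp))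
          (integrable_finsetSum _ fun n _ ↦ integrable n) fun x ↦ ?_
        exact norm_fderiv_weightedTuple_sq_le hlam fun n ↦ (hu n).differentiable one_ne_zero x
    _ = ∑ n, lam n * ∫ x, ‖fderiv ℝ (u n) x‖ ^ 2 ∂μ := by
        rw [integral_finsetSum _ fun n _ ↦ integrable n]
        simp only [integral_const_mul]

theorem kinetic_bound_no_orthogonality_general [FiniteDimensional ℝ E] [Nontrivial E]
    (μ : Measure E) [μ.IsAddHaarMeasure] :
    ∃ K : ℝ, 0 < K ∧
      ∀ (ι : Type v) [Fintype ι] (F : Type w) [NormedAddCommGroup F] [InnerProductSpace ℝ F]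
        (u : ι → E → F) (lam : ι → ℝ),
        (∀ n, ContDiff ℝ 1 (u n)) →
        (∀ n, HasCompactSupport (u n)) →
        (∀ n, 0 ≤ lam n) →
        0 < (∫ x, ∑ n, lam n * ‖u n x‖ ^ 2 ∂μ) →
        K * (∫ x, ∑ n, lam n * ‖u n x‖ ^ 2 ∂μ) ^ (-(2 / (finrank ℝ E : ℝ))) *
            ∫ x, (∑ n, lam n * ‖u n x‖ ^ 2) ^ (1 + 2 / (finrank ℝ E : ℝ)) ∂μ ≤
          ∑ n, lam n * ∫ x, ‖fderiv ℝ (u n) x‖ ^ 2 ∂μ := by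
  obtain ⟨C, hC⟩ := exists_isGagliardoNirenbergConst.{_, max v w} μ
  refine ⟨(C + 1 : ℝ)⁻¹, by positivity, fun ι _ F _ _ u lam hu hu_supp hlam mass_pos ↦ ?_⟩
  simp only [← norm_weightedTuple_sq hlam] at mass_pos ⊢
  refine le_trans ?_ (integral_norm_fderiv_weightedTuple_sq_le hlam hu hu_supp)
  have gagliardo_nirenberg := hC.integral_rpow_le (contDiff_weightedTuple lam hu)
    (hasCompactSupport_weightedTuple lam hu_supp)
  rw [Real.rpow_neg mass_pos.le, ← mul_inv, inv_mul_le_iff₀ (by positivity)]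
  refine gagliardo_nirenberg.trans ?_
  gcongr
  exact le_add_of_nonneg_right zero_le_one

end KineticEnergy

lemma norm_fderiv_sq_le_gradSq {d : ℕ} (f : EuclideanSpace ℝ (Fin d) → ℂ)
    (x : EuclideanSpace ℝ (Fin d)) : ‖fderiv ℝ f x‖ ^ 2 ≤ gradSq f x := by
  simpa [gradSq] using
    opNorm_sq_le_sum_norm_apply_sq (EuclideanSpace.basisFun (Fin d) ℝ) (fderiv ℝ f x)

lemma integrable_gradSq {d : ℕ} {f : EuclideanSpace ℝ (Fin d) → ℂ} (hf : ContDiff ℝ 1 f)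
    (hf_supp : HasCompactSupport f) : Integrable (gradSq f) := by
  have continuous_gradSq : Continuous (gradSq f) := by
    have := hf.continuous_fderiv one_ne_zero
    unfold gradSq
    fun_prop
  exact continuous_gradSq.integrable_of_hasCompactSupport <| (hf_supp.fderiv ℝ).comp_left
    (g := fun L : EuclideanSpace ℝ (Fin d) →L[ℝ] ℂ ↦ ∑ i, ‖L (EuclideanSpace.single i 1)‖ ^ 2)
    (by simp)

lemma integral_norm_fderiv_sq_le_integral_gradSq {d : ℕ} {f : EuclideanSpace ℝ (Fin d) → ℂ}
    (hf : ContDiff ℝ 1 f) (hf_supp : HasCompactSupport f) :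
    ∫ x, ‖fderiv ℝ f x‖ ^ 2 ≤ ∫ x, gradSq f x :=
  integral_mono (integrable_norm_fderiv_sq hf hf_supp) (integrable_gradSq hf hf_supp)
    (norm_fderiv_sq_le_gradSq f)

/-- Kinetic energy bound without orthogonality: with `ρ = Σₙ λₙ |uₙ|²`, `λₙ ≥ 0`, and
`∫ ρ > 0`, one has `Σₙ λₙ ∫ |∇uₙ|² ≥ K (∫ ρ)^{−2/d} ∫ ρ^{1+2/d}`. -/
theorem kinetic_bound_no_orthogonality (d : ℕ) (hd : 1 ≤ d) :
    ∃ K : ℝ, 0 < K ∧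
      ∀ (N : ℕ) (u : Fin N → EuclideanSpace ℝ (Fin d) → ℂ) (lam : Fin N → ℝ),
        (∀ n, ContDiff ℝ 1 (u n)) →
        (∀ n, HasCompactSupport (u n)) →
        (∀ n, 0 ≤ lam n) →
        0 < (∫ x, ∑ n, lam n * ‖u n x‖ ^ 2) →
        ∑ n, lam n * ∫ x, gradSq (u n) x
          ≥ K * (∫ x, ∑ n, lam n * ‖u n x‖ ^ 2) ^ (-(2 / (d : ℝ))) *
              ∫ x, (∑ n, lam n * ‖u n x‖ ^ 2) ^ (1 + 2 / (d : ℝ)) := by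
  have : Nontrivial (EuclideanSpace ℝ (Fin d)) := nontrivial_of_finrank_pos (R := ℝ) (by simpa)
  obtain ⟨K, hK, bound⟩ :=
    kinetic_bound_no_orthogonality_general (volume : Measure (EuclideanSpace ℝ (Fin d)))
  simp only [finrank_euclideanSpace_fin] at bound
  refine ⟨K, hK, fun N u lam hu hu_supp hlam mass_pos ↦
    (bound (Fin N) ℂ u lam hu hu_supp hlam mass_pos).trans (Finset.sum_le_sum fun n _ ↦ ?_)⟩
  exact mul_le_mul_of_nonneg_left (integral_norm_fderiv_sq_le_integral_gradSq (hu n) (hu_supp n))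
    (hlam n)
end
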